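/- Let G be a sofic group. Then for every finite subset F ⊆ G and every real number ε ∈ (0,1) there exists a finite nonempty set A and an (F,ε)-quasi-action φ : G → (A → A) of G on A which moreover satisfies: φ(1) is the identity map of A; for every g ∈ G with g ≠ 1 the map φ(g) is a bijection of A without fixed points; φ(g⁻¹) = φ(g)⁻¹ for all g ∈ G; and for any two distinct elements e, f ∈ F ∪ {1} the maps φ(e) and φ(f) are (1−ε)-different. -/

import Mathlib

/-- Two self-maps of a finite set `A` are `ε`-similar if the number of points where they
differ is at most `ε·|A|`. They are `(1-ε)`-different if they are not `(1-ε)`-similar. -/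
def EpsSimilar {A : Type*} [Fintype A] (ε : ℝ) (e f : A → A) : Prop :=
  (Nat.card {a : A // e a ≠ f a} : ℝ) ≤ ε * Fintype.card A

/-- An `(F, ε)`-quasi-action of a group `G` on a finite set `A`:
(a) `φ(ef)` is `ε`-similar to `φ(e)` followed by `φ(f)` for `e, f ∈ F`;
(b) `φ(1)` is `ε`-similar to the identity;
(c) for `1 ≠ e ∈ F`, `φ(e)` is `(1-ε)`-different from the identity. -/
def IsQuasiAction {G : Type*} [Group G] (F : Finset G) (ε : ℝ)
    {A : Type*} [Fintype A] (φ : G → A → A) : Prop :=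
  (∀ e ∈ F, ∀ f ∈ F, EpsSimilar ε (φ (e * f)) (fun a => φ f (φ e a))) ∧
  EpsSimilar ε (φ 1) id ∧
  (∀ e ∈ F, e ≠ 1 → ¬ EpsSimilar (1 - ε) (φ e) id)

/-- A group `G` is sofic if for every finite subset `F ⊆ G` and every `ε ∈ (0,1)` there is an
`(F, ε)`-quasi-action of `G` on some finite nonempty set. -/
def IsSofic (G : Type*) [Group G] : Prop :=
  ∀ (F : Finset G) (ε : ℝ), 0 < ε → ε < 1 →
    ∃ (A : Type) (_ : Fintype A) (_ : Nonempty A) (φ : G → A → A),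
      IsQuasiAction F ε φ

/-!
Double the space on which a sufficiently good quasi-action `ψ` of `G` lives. For each `g ≠ 1`, the
maps `ψ g` and `ψ g⁻¹` are mutually inverse bijections between two subsets of `A` of the same,
almost full, size; filling in the complements by a bijection chosen symmetrically in `g` and `g⁻¹`
yields permutations `σ g` with `σ g⁻¹ = (σ g)⁻¹`. On `A × Bool`, let `g` act by `σ g` on the first
coordinate and switch the sheet exactly over the few fixed points of `σ g`: this removes all fixed
points at a small cost. Separation of `e ≠ f` is then automatic, because wherever the images of `e`
and `f` agree, that of `e f⁻¹` would fix a point if the action were multiplicative there.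
-/

open Equiv (Perm)
open scoped Pointwise

section Similarity

variable {A : Type*} [Fintype A] {δ ε : ℝ} {e e' f f' h : A → A}

theorem epsSimilar_iff_hammingDist_le [DecidableEq A] :
    EpsSimilar ε e f ↔ (hammingDist e f : ℝ) ≤ ε * Fintype.card A := by
  rw [EpsSimilar, Nat.card_eq_fintype_card, Fintype.card_subtype, hammingDist]

theorem not_epsSimilar_one_sub_iff [DecidableEq A] :
    ¬ EpsSimilar (1 - ε) e f ↔
      ((Finset.univ.filter fun a => e a = f a).card : ℝ) < ε * Fintype.card A := by
  have hcard : ((Finset.univ.filter fun a => e a = f a).card : ℝ) + hammingDist e f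
      = Fintype.card A := by
    exact_mod_cast Finset.card_filter_add_card_filter_not (s := Finset.univ) fun a => e a = f a
  rw [epsSimilar_iff_hammingDist_le, not_le, ← hcard]
  constructor <;> intro <;> linarith

namespace EpsSimilar

theorem refl (hε : 0 ≤ ε) (e : A → A) : EpsSimilar ε e e := by
  classical
  rw [epsSimilar_iff_hammingDist_le, hammingDist_self, Nat.cast_zero]
  positivity

theorem symm (hef : EpsSimilar ε e f) : EpsSimilar ε f e := by
  classical
  rwa [epsSimilar_iff_hammingDist_le, hammingDist_comm, ← epsSimilar_iff_hammingDist_le]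

theorem trans (hef : EpsSimilar δ e f) (hfh : EpsSimilar ε f h) : EpsSimilar (δ + ε) e h := by
  classical
  rw [epsSimilar_iff_hammingDist_le] at *
  calc (hammingDist e h : ℝ)
      ≤ hammingDist e f + hammingDist f h := mod_cast hammingDist_triangle e f h
    _ ≤ δ * Fintype.card A + ε * Fintype.card A := add_le_add hef hfh
    _ = (δ + ε) * Fintype.card A := (add_mul _ _ _).symm

theorem mono (hef : EpsSimilar δ e f) (hδε : δ ≤ ε) : EpsSimilar ε e f :=
  le_trans hef (mul_le_mul_of_nonneg_right hδε (Nat.cast_nonneg _))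

theorem of_ne_imp_ne (hef : EpsSimilar ε e f) (hne : ∀ a, e' a ≠ f' a → e a ≠ f a) :
    EpsSimilar ε e' f' := by
  classical
  rw [epsSimilar_iff_hammingDist_le] at *
  refine le_trans ?_ hef
  exact_mod_cast Finset.card_le_card (Finset.monotone_filter_right _ fun a _ => hne a)

theorem comp_left (hef : EpsSimilar ε e f) (h : A → A) : EpsSimilar ε (h ∘ e) (h ∘ f) :=
  hef.of_ne_imp_ne fun _ => mt (congrArg h)

theorem comp_right (hef : EpsSimilar ε e f) (hh : Function.Injective h) :
    EpsSimilar ε (e ∘ h) (f ∘ h) := by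
  refine le_trans ?_ hef
  exact_mod_cast Nat.card_le_card_of_injective
    (Subtype.map h fun _ ha => ha : {a // e (h a) ≠ f (h a)} → {a // e a ≠ f a})
    (Subtype.map_injective _ hh)

theorem comp (hf : EpsSimilar δ f f') (he : EpsSimilar ε e e') (hinj : Function.Injective e) :
    EpsSimilar (δ + ε) (f ∘ e) (f' ∘ e') :=
  (hf.comp_right hinj).trans (he.comp_left f')

end EpsSimilar

theorem epsSimilar_of_not_epsSimilar_one_sub (hef : ¬ EpsSimilar (1 - ε) e f)
    (himp : ∀ a, e' a ≠ f' a → e a = f a) : EpsSimilar ε e' f' := by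
  classical
  rw [not_epsSimilar_one_sub_iff] at hef
  rw [epsSimilar_iff_hammingDist_le]
  refine le_trans ?_ hef.le
  exact_mod_cast Finset.card_le_card (Finset.monotone_filter_right _ fun a _ => himp a)

theorem not_epsSimilar_one_sub_of_epsSimilar [Nonempty A] (hef' : EpsSimilar δ e' f')
    (hδε : δ < ε) (hne : ∀ a, e a = f a → e' a ≠ f' a) : ¬ EpsSimilar (1 - ε) e f := by
  classical
  rw [not_epsSimilar_one_sub_iff]
  rw [epsSimilar_iff_hammingDist_le] at hef'
  calc ((Finset.univ.filter fun a => e a = f a).card : ℝ)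
      ≤ hammingDist e' f' := mod_cast
        Finset.card_le_card (Finset.monotone_filter_right _ fun a _ => hne a)
    _ ≤ δ * Fintype.card A := hef'
    _ < ε * Fintype.card A := by gcongr

theorem epsSimilar_prodMap_id_iff {B : Type*} [Fintype B] [Nonempty B] :
    EpsSimilar ε (Prod.map e (id : B → B)) (Prod.map f id) ↔ EpsSimilar ε e f := by
  have hcard : Nat.card {x : A × B // Prod.map e id x ≠ Prod.map f id x}
      = Nat.card {a // e a ≠ f a} * Fintype.card B := by
    rw [← Nat.card_eq_fintype_card, ← Nat.card_prod]
    refine Nat.card_congr (.trans (.subtypeEquivRight fun x => ?_)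
      Equiv.prodSubtypeFstEquivSubtypeProd)
    simp only [Prod.map_apply', ne_eq, Prod.mk.injEq, and_true]
  have hB : (0 : ℝ) < Fintype.card B := mod_cast Fintype.card_pos
  rw [EpsSimilar, hcard, Fintype.card_prod, Nat.cast_mul, Nat.cast_mul, ← mul_assoc,
    mul_le_mul_iff_left₀ hB, EpsSimilar]

end Similarity

section PermCompletion

/-- A bijection between finite types of the same cardinality, chosen through enumerations of the
two types so that exchanging them inverts it; `Fintype.equivOfCardEq` has no such symmetry. -/
noncomputable def equivOfEnumeration {α β : Type*} [Finite α] [Finite β]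
    (hcard : Nat.card α = Nat.card β) : α ≃ β :=
  (Finite.equivFin α).trans ((finCongr hcard).trans (Finite.equivFin β).symm)

/-- The bijection induced by `f` and `g` between the sets on which they are mutually inverse. -/
def mutualInverseEquiv {α β : Type*} (f : α → β) (g : β → α) :
    {a // g (f a) = a} ≃ {b // f (g b) = b} where
  toFun := Subtype.map f fun _ ha => congrArg f ha
  invFun := Subtype.map g fun _ ha => congrArg g ha
  left_inv a := Subtype.ext a.2
  right_inv a := Subtype.ext a.2

variable {A : Type*} [Finite A]

theorem card_not_leftInverse_eq (f g : A → A) :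
    Nat.card {a // ¬ g (f a) = a} = Nat.card {a // ¬ f (g a) = a} := by
  classical
  have := Fintype.ofFinite A
  simp only [Nat.card_eq_fintype_card]
  exact Fintype.card_compl_eq_card_compl _ _ (Fintype.card_congr (mutualInverseEquiv f g))

open scoped Classical in
/-- A permutation that agrees with `f` wherever `g` inverts `f`; the choice made elsewhere is
symmetric, in the sense that exchanging `f` and `g` inverts the permutation. -/
noncomputable def permCompletion (f g : A → A) : Perm A :=
  Equiv.subtypeCongr (mutualInverseEquiv f g) (equivOfEnumeration (card_not_leftInverse_eq f g))

theorem permCompletion_swap (f g : A → A) : permCompletion g f = (permCompletion f g)⁻¹ := rfl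

theorem permCompletion_apply {f g : A → A} {a : A} (ha : g (f a) = a) :
    permCompletion f g a = f a := by
  classical
  simp [permCompletion, Equiv.subtypeCongr, mutualInverseEquiv,
    Equiv.sumCompl_symm_apply_of_pos (p := fun a => g (f a) = a) ha]

end PermCompletion

section FlipFixedPoints

variable {A : Type*}

open scoped Classical in
/-- The lift of `σ` to two copies of `A` that switches copies exactly over the fixed points of `σ`,
so that it has no fixed points. -/
noncomputable def flipFixedPoints (σ : Perm A) : Perm (A × Bool) where
  toFun x := (σ x.1, x.2 ^^ decide (σ x.1 = x.1))
  invFun x := (σ⁻¹ x.1, x.2 ^^ decide (σ⁻¹ x.1 = x.1))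
  left_inv x := by simp [eq_comm]
  right_inv x := by simp [eq_comm]

theorem flipFixedPoints_inv (σ : Perm A) : flipFixedPoints σ⁻¹ = (flipFixedPoints σ)⁻¹ := rfl

theorem flipFixedPoints_apply_ne (σ : Perm A) (x : A × Bool) : flipFixedPoints σ x ≠ x := by
  intro hx
  have hfix : σ x.1 = x.1 := congrArg Prod.fst hx
  simpa [flipFixedPoints, hfix] using congrArg Prod.snd hx

theorem epsSimilar_flipFixedPoints [Fintype A] {ε : ℝ} {σ : Perm A}
    (hσ : ¬ EpsSimilar (1 - ε) σ id) : EpsSimilar ε (flipFixedPoints σ) (Prod.map σ id) := by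
  rw [← epsSimilar_prodMap_id_iff (B := Bool), Prod.map_id] at hσ
  refine epsSimilar_of_not_epsSimilar_one_sub hσ fun x hx => ?_
  by_contra hfix
  simp_all [flipFixedPoints, Prod.ext_iff]

end FlipFixedPoints

section DoubleCover

variable {G : Type*} [Group G] {A : Type*}

open scoped Classical in
/-- The modification of `ψ` on two copies of `A` that respects inverses, sends `1` to the identity
and every other element to a permutation without fixed points. -/
noncomputable def doubleCover [Finite A] (ψ : G → A → A) (g : G) : Perm (A × Bool) :=
  if g = 1 then 1 else flipFixedPoints (permCompletion (ψ g) (ψ g⁻¹))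

section Finite

variable [Finite A] (ψ : G → A → A)

theorem doubleCover_one : doubleCover ψ 1 = 1 := if_pos rfl

theorem doubleCover_inv (g : G) : doubleCover ψ g⁻¹ = (doubleCover ψ g)⁻¹ := by
  by_cases hg : g = 1
  · rw [hg, inv_one, doubleCover_one, inv_one]
  · rw [doubleCover, doubleCover, if_neg hg, if_neg (inv_ne_one.mpr hg), inv_inv,
      permCompletion_swap, flipFixedPoints_inv]

theorem doubleCover_apply_ne {g : G} (hg : g ≠ 1) (x : A × Bool) : doubleCover ψ g x ≠ x := by
  rw [doubleCover, if_neg hg]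
  exact flipFixedPoints_apply_ne _ x

end Finite

variable [Fintype A] {T : Finset G} {δ ε : ℝ} {ψ : G → A → A} {e f g : G}

theorem not_epsSimilar_doubleCover [Nonempty A]
    (hmul : EpsSimilar δ (doubleCover ψ (e * f⁻¹)) (doubleCover ψ f⁻¹ ∘ doubleCover ψ e))
    (hδε : δ < ε) (hef : e ≠ f) :
    ¬ EpsSimilar (1 - ε) (doubleCover ψ e) (doubleCover ψ f) := by
  refine not_epsSimilar_one_sub_of_epsSimilar hmul hδε fun x hx => ?_
  rw [Function.comp_apply, hx, doubleCover_inv, Perm.inv_def, Equiv.symm_apply_apply]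
  exact doubleCover_apply_ne ψ (mul_inv_eq_one.not.mpr hef) x

namespace IsQuasiAction

theorem inv_comp_self (hψ : IsQuasiAction T ε ψ) (hg : g ∈ T) (hg' : g⁻¹ ∈ T) :
    EpsSimilar (2 * ε) (ψ g⁻¹ ∘ ψ g) id := by
  have hmul : EpsSimilar ε (ψ (g * g⁻¹)) (ψ g⁻¹ ∘ ψ g) := hψ.1 g hg g⁻¹ hg'
  rw [mul_inv_cancel] at hmul
  rw [two_mul]
  exact hmul.symm.trans hψ.2.1

theorem epsSimilar_permCompletion (hψ : IsQuasiAction T ε ψ) (hg : g ∈ T) (hg' : g⁻¹ ∈ T) :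
    EpsSimilar (2 * ε) (permCompletion (ψ g) (ψ g⁻¹)) (ψ g) :=
  (hψ.inv_comp_self hg hg').of_ne_imp_ne fun _ => mt permCompletion_apply

theorem epsSimilar_doubleCover (hψ : IsQuasiAction T ε ψ) (hε : 0 ≤ ε) (hg : g ∈ T)
    (hg' : g⁻¹ ∈ T) : EpsSimilar (5 * ε) (doubleCover ψ g) (Prod.map (ψ g) id) := by
  by_cases hg1 : g = 1
  · have hone : EpsSimilar ε id (Prod.map (ψ 1) (id : Bool → Bool)) := by
      rw [← Prod.map_id, epsSimilar_prodMap_id_iff]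
      exact hψ.2.1.symm
    rw [hg1, doubleCover_one, Perm.coe_one]
    exact hone.mono (by linarith)
  · set σ := permCompletion (ψ g) (ψ g⁻¹)
    have hσψ : EpsSimilar (2 * ε) σ (ψ g) := hψ.epsSimilar_permCompletion hg hg'
    have hσ : ¬ EpsSimilar (1 - 3 * ε) σ id := fun hσ =>
      hψ.2.2 g hg hg1 ((hσψ.symm.trans hσ).mono (by linarith))
    rw [doubleCover, if_neg hg1]
    exact ((epsSimilar_flipFixedPoints hσ).trans (epsSimilar_prodMap_id_iff.mpr hσψ)).mono
      (by linarith)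

theorem epsSimilar_doubleCover_mul [DecidableEq G] (hψ : IsQuasiAction T ε ψ) (hε : 0 ≤ ε)
    (hT : T⁻¹ = T) (he : e ∈ T) (hf : f ∈ T) (hef : e * f ∈ T) :
    EpsSimilar (16 * ε) (doubleCover ψ (e * f)) (doubleCover ψ f ∘ doubleCover ψ e) := by
  have hcover : ∀ g ∈ T, EpsSimilar (5 * ε) (doubleCover ψ g) (Prod.map (ψ g) id) :=
    fun g hg => hψ.epsSimilar_doubleCover hε hg (Finset.mem_inv'.mp (hT.symm ▸ hg))
  have hmul : EpsSimilar ε (Prod.map (ψ (e * f)) (id : Bool → Bool))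
      (Prod.map (ψ f) id ∘ Prod.map (ψ e) id) := by
    rw [Prod.map_comp_map, Function.id_comp]
    exact epsSimilar_prodMap_id_iff.mpr (hψ.1 e he f hf)
  have hcomp : EpsSimilar (5 * ε + 5 * ε) (doubleCover ψ f ∘ doubleCover ψ e)
      (Prod.map (ψ f) id ∘ Prod.map (ψ e) id) :=
    (hcover f hf).comp (hcover e he) (doubleCover ψ e).injective
  exact (((hcover _ hef).trans hmul).trans hcomp.symm).mono (by linarith)

end IsQuasiAction

end DoubleCover

theorem exists_superset_one_mem_inv_eq {G : Type*} [Group G] [DecidableEq G] (F : Finset G) :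
    ∃ S : Finset G, F ⊆ S ∧ 1 ∈ S ∧ S⁻¹ = S := by
  refine ⟨insert 1 (F ∪ F⁻¹), ?_, Finset.mem_insert_self _ _, ?_⟩
  · exact Finset.subset_union_left.trans (Finset.subset_insert _ _)
  · ext g
    simp [or_comm]

/-- Lemma 1 (good quasi-actions): a sofic group admits, for each finite `F` and `ε ∈ (0,1)`,
an `(F,ε)`-quasi-action `φ` such that `φ(1) = id`, for `g ≠ 1` the map `φ(g)` is a fixpoint-free
bijection, `φ(g⁻¹)` is inverse to `φ(g)`, and distinct elements of `F ∪ {1}` are mapped to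
`(1-ε)`-different maps. -/
theorem sofic_exists_good_quasiAction {G : Type*} [Group G] (hG : IsSofic G)
    (F : Finset G) (ε : ℝ) (hε0 : 0 < ε) (hε1 : ε < 1) :
    ∃ (A : Type) (_ : Fintype A) (_ : Nonempty A) (φ : G → A → A),
      IsQuasiAction F ε φ ∧
      φ 1 = id ∧
      (∀ g : G, g ≠ 1 → Function.Bijective (φ g) ∧ ∀ a : A, φ g a ≠ a) ∧
      (∀ g : G, Function.LeftInverse (φ g⁻¹) (φ g) ∧ Function.RightInverse (φ g⁻¹) (φ g)) ∧
      (∀ e : G, (e ∈ F ∨ e = 1) → ∀ f : G, (f ∈ F ∨ f = 1) → e ≠ f →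
        ¬ EpsSimilar (1 - ε) (φ e) (φ f)) := by
  classical
  obtain ⟨S, hFS, h1S, hS⟩ := exists_superset_one_mem_inv_eq F
  obtain ⟨A, _, _, ψ, hψ⟩ := hG (S * S) (ε / 32) (by linarith) (by linarith)
  have hSS : S ⊆ S * S := fun g hg => mul_one g ▸ Finset.mul_mem_mul hg h1S
  have hSS_inv : (S * S)⁻¹ = S * S := by rw [mul_inv_rev, hS]
  have hmul : ∀ e ∈ S, ∀ f ∈ S,
      EpsSimilar (ε / 2) (doubleCover ψ (e * f)) (doubleCover ψ f ∘ doubleCover ψ e) :=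
    fun e he f hf => (hψ.epsSimilar_doubleCover_mul (by linarith) hSS_inv (hSS he) (hSS hf)
      (Finset.mul_mem_mul he hf)).mono (by linarith)
  have hsep : ∀ e ∈ S, ∀ f ∈ S, e ≠ f →
      ¬ EpsSimilar (1 - ε) (doubleCover ψ e) (doubleCover ψ f) := fun e he f hf =>
    not_epsSimilar_doubleCover (hmul e he f⁻¹ (Finset.mem_inv'.mp (hS.symm ▸ hf))) (by linarith)
  have hone : ⇑(doubleCover ψ 1) = id := congrArg DFunLike.coe (doubleCover_one ψ)
  have hmem : ∀ g, g ∈ F ∨ g = 1 → g ∈ S := fun g hg => hg.elim (@hFS g) (· ▸ h1S)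
  refine ⟨A × Bool, inferInstance, inferInstance, fun g => doubleCover ψ g, ⟨?_, ?_, ?_⟩, hone,
    fun g hg => ⟨(doubleCover ψ g).bijective, doubleCover_apply_ne ψ hg⟩, fun g => ?_,
    fun e he f hf => hsep e (hmem e he) f (hmem f hf)⟩
  · exact fun e he f hf => (hmul e (hFS he) f (hFS hf)).mono (by linarith)
  · simpa only [hone] using EpsSimilar.refl hε0.le id
  · simpa only [hone] using fun e he => hsep e (hFS he) 1 h1S
  · simp only [doubleCover_inv]
    exact ⟨(doubleCover ψ g).leftInverse_symm, (doubleCover ψ g).rightInverse_symm⟩
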